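/- For every positive integer n and every positive integer m, there exists a P_{3n}-induced-saturated graph with more than m vertices; consequently, for each positive integer n there are infinitely many (pairwise non-isomorphic) P_{3n}-induced-saturated graphs. -/

import Mathlib

open SimpleGraph

/-- `G` is `H`-induced-saturated: `G` has no induced copy of `H`, removing any edge of `G`
creates an induced copy of `H`, and adding any non-edge of `G` creates an induced copy of `H`. -/
def InducedSaturated {V : Type*} {W : Type*} (G : SimpleGraph V) (H : SimpleGraph W) : Prop :=
  IsEmpty (H ↪g G) ∧
  (∀ u v : V, G.Adj u v → Nonempty (H ↪g G.deleteEdges {s(u, v)})) ∧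
  (∀ u v : V, u ≠ v → ¬ G.Adj u v →
    Nonempty (H ↪g (G ⊔ SimpleGraph.fromEdgeSet {s(u, v)})))


/-- cyclic adjacency of indices `0, …, N-1` -/
def cyc (N i j : ℕ) : Prop :=
  i + 1 = j ∨ j + 1 = i ∨ (i = 0 ∧ j + 1 = N) ∨ (j = 0 ∧ i + 1 = N)

/-- adjacency in the complementary prism of the cycle `C_N`: the colour `false` is the cycle,
the colour `true` is its complement. -/
def cpAdj (N : ℕ) (x y : Bool × ℕ) : Prop :=
  (x.1 = false ∧ y.1 = false ∧ cyc N x.2 y.2) ∨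
  (x.1 = true ∧ y.1 = true ∧ x.2 ≠ y.2 ∧ ¬ cyc N x.2 y.2) ∨
  (x.1 ≠ y.1 ∧ x.2 = y.2)

/-- the pair flipped -/
def isPair (u v x y : Bool × ℕ) : Prop := (x = u ∧ y = v) ∨ (x = v ∧ y = u)

def flipAdj (N : ℕ) (u v x y : Bool × ℕ) : Prop :=
  (cpAdj N x y ∧ ¬ isPair u v x y) ∨ (¬ cpAdj N x y ∧ isPair u v x y)

def FlipPath (N : ℕ) (u v : Bool × ℕ) : Prop :=
  ∃ p : ℕ → Bool × ℕ, (∀ t, t ≤ N → (p t).2 < N) ∧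
    ∀ s t, s ≤ N → t ≤ N → s < t → p s ≠ p t ∧ (flipAdj N u v (p s) (p t) ↔ s + 1 = t)

theorem cyc_comm {N i j : ℕ} : cyc N i j ↔ cyc N j i := by unfold cyc; omega

theorem cpAdj_comm {N : ℕ} {x y : Bool × ℕ} : cpAdj N x y ↔ cpAdj N y x := by
  unfold cpAdj
  rw [cyc_comm (i := x.2), ne_comm (a := x.2), ne_comm (a := x.1), eq_comm (a := x.2) (b := y.2)]
  tauto

theorem isPair_swap {u v x y : Bool × ℕ} : isPair u v x y ↔ isPair v u x y := by
  unfold isPair; tauto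

theorem isPair_comm {u v x y : Bool × ℕ} : isPair u v x y ↔ isPair u v y x := by
  unfold isPair; tauto

theorem flipAdj_comm {N : ℕ} {u v x y : Bool × ℕ} :
    flipAdj N u v x y ↔ flipAdj N u v y x := by
  unfold flipAdj; rw [cpAdj_comm, isPair_comm]

theorem FlipPath.swap {N : ℕ} {u v : Bool × ℕ} (h : FlipPath N u v) : FlipPath N v u := by
  obtain ⟨p, h1, h2⟩ := h
  refine ⟨p, h1, fun s t hs ht hst => ?_⟩
  have := h2 s t hs ht hst
  unfold flipAdj at *
  rwa [isPair_swap]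

def rot (N s i : ℕ) : ℕ := if i + s < N then i + s else i + s - N

def rotv (N s : ℕ) (x : Bool × ℕ) : Bool × ℕ := (x.1, rot N s x.2)

theorem rot_lt {N s i : ℕ} (hs : s < N) (hi : i < N) : rot N s i < N := by
  unfold rot; split_ifs <;> omega

theorem rot_inj {N s i j : ℕ} (hs : s < N) (hi : i < N) (hj : j < N) :
    rot N s i = rot N s j ↔ i = j := by
  unfold rot; split_ifs <;> omega

theorem rot_cyc {N s i j : ℕ} (hN : 5 ≤ N) (hs : s < N) (hi : i < N) (hj : j < N) :
    cyc N (rot N s i) (rot N s j) ↔ cyc N i j := by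
  unfold rot cyc; split_ifs <;> omega

theorem rotv_inj {N s : ℕ} {x y : Bool × ℕ} (hs : s < N) (hi : x.2 < N) (hj : y.2 < N) :
    rotv N s x = rotv N s y ↔ x = y := by
  unfold rotv; rw [Prod.ext_iff, Prod.ext_iff]; simp only; rw [rot_inj hs hi hj]

theorem rotv_adj {N s : ℕ} {x y : Bool × ℕ} (hN : 5 ≤ N) (hs : s < N) (hi : x.2 < N)
    (hj : y.2 < N) : cpAdj N (rotv N s x) (rotv N s y) ↔ cpAdj N x y := by
  unfold rotv cpAdj; simp only [ne_eq]; rw [rot_inj hs hi hj, rot_cyc hN hs hi hj]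

theorem FlipPath.rotate {N s : ℕ} {u v : Bool × ℕ} (hN : 5 ≤ N) (hs : s < N) (hu : u.2 < N)
    (hv : v.2 < N) (h : FlipPath N u v) : FlipPath N (rotv N s u) (rotv N s v) := by
  obtain ⟨p, h1, h2⟩ := h
  refine ⟨fun t => rotv N s (p t), fun t ht => rot_lt hs (h1 t ht), fun a b ha hb hab => ?_⟩
  have := h2 a b ha hb hab
  have ea := h1 a ha
  have eb := h1 b hb
  simp only [flipAdj, isPair] at *
  rw [ne_eq, rotv_inj hs ea eb, rotv_adj hN hs ea eb, rotv_inj hs ea hu, rotv_inj hs ea hv,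
    rotv_inj hs eb hu, rotv_inj hs eb hv]
  exact this

/-- delete `a_0 a_{N-1}` -/
theorem fp_aa_del {N : ℕ} (hN : 5 ≤ N) : FlipPath N (false, 0) (false, N - 1) := by
  refine ⟨fun t => if t < N then (false, t) else (true, N - 1), ?_, ?_⟩
  · intro t ht; dsimp only; split_ifs <;> simp only <;> omega
  · intro s t hs ht hst
    dsimp only
    split_ifs <;> simp [flipAdj, isPair, cpAdj, cyc] <;> omega

theorem fp_aa_add {N d : ℕ} (hd : 2 ≤ d) (hd' : d + 3 ≤ N) : FlipPath N (false, 0) (false, d) := by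
  refine ⟨fun t => if t + 1 < d then (false, t + 2) else if t + 1 = d then (false, 0)
    else if t + 3 ≤ N then (false, N - (t + 1 - d) )
    else if t + 2 = N then (true, d + 2) else if t + 1 = N then (true, 1) else (true, d + 1), ?_, ?_⟩
  · intro t ht; dsimp only; split_ifs <;> simp only <;> omega
  · intro s t hs ht hst
    dsimp only
    split_ifs <;> simp [flipAdj, isPair, cpAdj, cyc] <;> omega

theorem fp_ab_zero {N : ℕ} (hN : 5 ≤ N) : FlipPath N (false, 0) (true, 0) := by
  refine ⟨fun t => if t + 1 < N then (false, t) else if t + 1 = N then (true, N - 2) else (true, 0), ?_, ?_⟩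
  · intro t ht; dsimp only; split_ifs <;> simp only <;> omega
  · intro s t hs ht hst
    dsimp only
    split_ifs <;> simp [flipAdj, isPair, cpAdj, cyc] <;> omega

theorem fp_ab_one {N : ℕ} (hN : 5 ≤ N) : FlipPath N (false, 0) (true, 1) := by
  refine ⟨fun t => if t = 0 then (true, 1) else if t = 1 then (false, 0)
    else if t < N then (false, N + 1 - t) else (true, 2), ?_, ?_⟩
  · intro t ht; dsimp only; split_ifs <;> simp only <;> omega
  · intro s t hs ht hst
    dsimp only
    split_ifs <;> simp [flipAdj, isPair, cpAdj, cyc] <;> omega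

theorem fp_ab_mid {N d : ℕ} (hN : 5 ≤ N) (hd : 2 ≤ d) (hd' : d + 2 ≤ N) : FlipPath N (false, 0) (true, d) := by
  refine ⟨fun t => if t + 2 < d then (false, t + 2) else if t + 2 = d then (true, d - 1)
    else if t + 1 = d then (true, d + 1) else if t + 1 < N then (false, t + 1)
    else if t + 1 = N then (false, 0) else (true, d), ?_, ?_⟩
  · intro t ht; dsimp only; split_ifs <;> simp only <;> omega
  · intro s t hs ht hst
    dsimp only
    split_ifs <;> simp [flipAdj, isPair, cpAdj, cyc] <;> omega

theorem fp_ab_last {N : ℕ} (hN : 5 ≤ N) : FlipPath N (false, 0) (true, N - 1) := by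
  refine ⟨fun t => if t = 0 then (true, N - 1) else if t < N then (false, t - 1) else (true, N - 2), ?_, ?_⟩
  · intro t ht; dsimp only; split_ifs <;> simp only <;> omega
  · intro s t hs ht hst
    dsimp only
    split_ifs <;> simp [flipAdj, isPair, cpAdj, cyc] <;> omega

theorem fp_bb_one {N : ℕ} (hN : 5 ≤ N) : FlipPath N (true, 0) (true, 1) := by
  refine ⟨fun t => if t + 2 < N then (false, t + 2) else if t + 2 = N then (false, 0)
    else if t + 1 = N then (true, 0) else (true, 1), ?_, ?_⟩
  · intro t ht; dsimp only; split_ifs <;> simp only <;> omega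
  · intro s t hs ht hst
    dsimp only
    split_ifs <;> simp [flipAdj, isPair, cpAdj, cyc] <;> omega

theorem fp_bb_two {N : ℕ} (hN : 5 ≤ N) : FlipPath N (true, 0) (true, 2) := by
  refine ⟨fun t => if t = 0 then (true, 0) else if t = 1 then (false, 0)
    else if t < N then (false, N + 1 - t) else (true, 2), ?_, ?_⟩
  · intro t ht; dsimp only; split_ifs <;> simp only <;> omega
  · intro s t hs ht hst
    dsimp only
    split_ifs <;> simp [flipAdj, isPair, cpAdj, cyc] <;> omega

theorem fp_bb_mid {N d : ℕ} (hd : 3 ≤ d) (hd' : d + 3 ≤ N) : FlipPath N (true, 0) (true, d) := by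
  refine ⟨fun t => if t + 3 ≤ d then (false, d - 3 - t) else if t + 2 = d then (true, 0)
    else if t + 1 = d then (true, d - 1) else if t = d then (true, N - 1)
    else if t = d + 1 then (true, d) else (false, t - 2), ?_, ?_⟩
  · intro t ht; dsimp only; split_ifs <;> simp only <;> omega
  · intro s t hs ht hst
    dsimp only
    split_ifs <;> simp [flipAdj, isPair, cpAdj, cyc] <;> omega

theorem rotv_zero {N i : ℕ} {x : Bool} (hi : i < N) : rotv N i (x, 0) = (x, i) := by
  simp [rotv, rot, hi]

theorem exists_rot {N i j : ℕ} (hi : i < N) (hj : j < N) :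
    ∃ d, d < N ∧ rot N i d = j ∧ ((i ≤ j ∧ d = j - i) ∨ (j < i ∧ d = j + N - i)) := by
  by_cases h : i ≤ j
  · refine ⟨j - i, by omega, ?_, by omega⟩
    unfold rot; split_ifs <;> omega
  · refine ⟨j + N - i, by omega, ?_, by omega⟩
    unfold rot; split_ifs <;> omega

theorem FlipPath.of_base {N i j d : ℕ} {x y : Bool} (hN : 5 ≤ N) (hi : i < N) (hd : d < N)
    (hj : rot N i d = j) (h : FlipPath N (x, 0) (y, d)) : FlipPath N (x, i) (y, j) := by
  have := FlipPath.rotate hN hi (by simp only; omega) (by simpa using hd) h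
  rw [rotv_zero hi] at this
  subst hj
  exact this

theorem flip_all {N : ℕ} (hN : 5 ≤ N) (u v : Bool × ℕ) (huv : u ≠ v) (hu : u.2 < N)
    (hv : v.2 < N) : FlipPath N u v := by
  obtain ⟨x, i⟩ := u
  obtain ⟨y, j⟩ := v
  simp only at hu hv
  obtain ⟨d, hd, hr, hdd⟩ := exists_rot hu hv
  obtain ⟨e, he, hr', hee⟩ := exists_rot hv hu
  have ab : ∀ d, d < N → FlipPath N (false, 0) (true, d) := by
    intro d hd
    rcases Nat.lt_or_ge d 2 with h | h
    · interval_cases d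
      · exact fp_ab_zero hN
      · exact fp_ab_one hN
    · by_cases h2 : d + 2 ≤ N
      · exact fp_ab_mid hN h h2
      · obtain rfl : d = N - 1 := by omega
        exact fp_ab_last hN
  cases x <;> cases y
  · have hij : i ≠ j := by rintro rfl; exact huv rfl
    have aa : ∀ d, 2 ≤ d → d < N → d ≠ N - 2 → FlipPath N (false, 0) (false, d) := by
      intro d h1 h2 h3
      by_cases h : d + 3 ≤ N
      · exact fp_aa_add h1 h
      · obtain rfl : d = N - 1 := by omega
        exact fp_aa_del hN
    by_cases h : 2 ≤ d ∧ d ≠ N - 2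
    · exact FlipPath.of_base hN hu hd hr (aa d h.1 hd h.2)
    · exact (FlipPath.of_base hN hv he hr' (aa e (by omega) he (by omega))).swap
  · exact FlipPath.of_base hN hu hd hr (ab d hd)
  · exact (FlipPath.of_base hN hv he hr' (ab e he)).swap
  · have hij : i ≠ j := by rintro rfl; exact huv rfl
    have bb : ∀ d, 1 ≤ d → d + 3 ≤ N → FlipPath N (true, 0) (true, d) := by
      intro d h1 h2
      by_cases h : 3 ≤ d
      · exact fp_bb_mid h h2
      · interval_cases d
        · exact fp_bb_one hN
        · exact fp_bb_two hN
    by_cases h : d + 3 ≤ N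
    · exact FlipPath.of_base hN hu hd hr (bb d (by omega) h)
    · exact (FlipPath.of_base hN hv he hr' (bb e (by omega) (by omega))).swap

/-- an induced path on the positions `0, …, N` with colours `c` and indices `f` -/
structure IndPath (N : ℕ) (c : ℕ → Bool) (f : ℕ → ℕ) : Prop where
  lt : ∀ s, s ≤ N → f s < N
  aa : ∀ s t, s ≤ N → t ≤ N → s ≠ t → c s = false → c t = false →
    f s ≠ f t ∧ (cyc N (f s) (f t) ↔ (s + 1 = t ∨ t + 1 = s))
  bb : ∀ s t, s ≤ N → t ≤ N → s ≠ t → c s = true → c t = true →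
    f s ≠ f t ∧ (¬ cyc N (f s) (f t) ↔ (s + 1 = t ∨ t + 1 = s))
  ab : ∀ s t, s ≤ N → t ≤ N → c s = false → c t = true →
    (f s = f t ↔ (s + 1 = t ∨ t + 1 = s))

theorem IndPath.rev {N : ℕ} {c : ℕ → Bool} {f : ℕ → ℕ} (h : IndPath N c f) :
    IndPath N (fun t => c (N - t)) (fun t => f (N - t)) := by
  refine ⟨fun s hs => h.lt _ (by omega), fun s t hs ht hst h1 h2 => ?_,
    fun s t hs ht hst h1 h2 => ?_, fun s t hs ht h1 h2 => ?_⟩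
  · have := h.aa (N - s) (N - t) (by omega) (by omega) (by omega) h1 h2
    refine ⟨this.1, this.2.trans (by omega)⟩
  · have := h.bb (N - s) (N - t) (by omega) (by omega) (by omega) h1 h2
    refine ⟨this.1, this.2.trans (by omega)⟩
  · have := h.ab (N - s) (N - t) (by omega) (by omega) h1 h2
    exact this.trans (by omega)

/-- `a_j` lies on the path -/
def Present (N : ℕ) (c : ℕ → Bool) (f : ℕ → ℕ) (j : ℕ) : Prop :=
  ∃ s, s ≤ N ∧ c s = false ∧ f s = j

theorem IndPath.card_image {N : ℕ} {c : ℕ → Bool} {f : ℕ → ℕ} (h : IndPath N c f)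
    (B : Finset ℕ) (hB : ∀ s, s ≤ N → (c s = true ↔ s ∈ B)) (hBN : ∀ s ∈ B, s ≤ N) :
    (((Finset.range (N + 1)) \ B).image f).card + B.card = N + 1 := by
  rw [Finset.card_image_of_injOn]
  · have hsub : B ⊆ Finset.range (N + 1) := fun s hs => by
      have := hBN s hs
      simp; omega
    have := Finset.card_sdiff_add_card_eq_card hsub
    simpa using this
  · intro s hs t ht hst
    simp only [Finset.coe_sdiff, Finset.coe_range, Set.mem_sdiff, Set.mem_Iio,
      Finset.mem_coe] at hs ht
    by_contra hne
    have h1 : c s = false := by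
      have := hB s (by omega)
      simpa using mt this.1 hs.2
    have h2 : c t = false := by
      have := hB t (by omega)
      simpa using mt this.1 ht.2
    exact (h.aa s t (by omega) (by omega) hne h1 h2).1 hst

theorem IndPath.present {N : ℕ} {c : ℕ → Bool} {f : ℕ → ℕ} (h : IndPath N c f)
    (B : Finset ℕ) (hB : ∀ s, s ≤ N → (c s = true ↔ s ∈ B)) (hBN : ∀ s ∈ B, s ≤ N)
    (S : Finset ℕ) (hS : ∀ j ∈ S, j < N) (hcard : S.card + 1 = B.card)
    (habs : ∀ j ∈ S, ¬ Present N c f j) : ∀ j, j < N → j ∉ S → Present N c f j := by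
  have hc := h.card_image B hB hBN
  set I := ((Finset.range (N + 1)) \ B).image f with hI
  have hmem : ∀ j ∈ I, Present N c f j := by
    intro j hj
    rw [hI, Finset.mem_image] at hj
    obtain ⟨s, hs, rfl⟩ := hj
    simp only [Finset.mem_sdiff, Finset.mem_range] at hs
    refine ⟨s, by omega, ?_, rfl⟩
    have := hB s (by omega)
    simpa using mt this.1 hs.2
  have hsub : I ⊆ Finset.range N \ S := by
    intro j hj
    obtain ⟨s, hs, hc, rfl⟩ := hmem j hj
    simp only [Finset.mem_sdiff, Finset.mem_range]
    exact ⟨h.lt s hs, fun hh => habs _ hh ⟨s, hs, hc, rfl⟩⟩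
  have hS' : S ⊆ Finset.range N := fun j hj => by simpa using hS j hj
  have h2 := Finset.card_sdiff_add_card_eq_card hS'
  rw [Finset.card_range] at h2
  have heq := Finset.eq_of_subset_of_card_le hsub (by omega)
  intro j hj hjS
  apply hmem
  rw [heq]
  simp [hj, hjS]

theorem exists_nbrs {N i : ℕ} (hN : 5 ≤ N) (hi : i < N) :
    ∃ x y, x < N ∧ y < N ∧ x ≠ y ∧ cyc N i x ∧ cyc N i y := by
  refine ⟨if i + 1 = N then 0 else i + 1, if i = 0 then N - 1 else i - 1, ?_⟩
  unfold cyc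
  split_ifs <;> omega

theorem cyc_irrefl {N i : ℕ} (hN : 5 ≤ N) : ¬ cyc N i i := by unfold cyc; omega

theorem cyc_deg {N i x y z : ℕ} (h1 : cyc N i x) (h2 : cyc N i y)
    (h3 : cyc N i z) (hi : i < N) (hx : x < N) (hy : y < N) (hz : z < N) :
    x = y ∨ x = z ∨ y = z := by
  unfold cyc at *; omega

theorem cyc_tri {N x y z : ℕ} (hN : 5 ≤ N) (h1 : cyc N x y) (h2 : cyc N y z)
    (h3 : cyc N x z) (hx : x < N) (hy : y < N) (hz : z < N) : False := by
  unfold cyc at *; omega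

theorem cyc_quad {N x y z w : ℕ} (hN : 5 ≤ N) (h1 : cyc N x y) (h2 : cyc N y z)
    (h3 : cyc N z w) (h4 : cyc N w x) (hx : x < N) (hy : y < N) (hz : z < N) (hw : w < N)
    (hxz : x ≠ z) (hyw : y ≠ w) : False := by
  unfold cyc at *; omega

theorem IndPath.two_nbrs {N : ℕ} {c : ℕ → Bool} {f : ℕ → ℕ} (h : IndPath N c f) (hN : 5 ≤ N)
    {s : ℕ} (hs : s ≤ N) (hc : c s = false)
    (hp : ∀ j, j < N → cyc N (f s) j → Present N c f j) :
    1 ≤ s ∧ s + 1 ≤ N ∧ c (s - 1) = false ∧ c (s + 1) = false := by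
  obtain ⟨x, y, hx, hy, hxy, hcx, hcy⟩ := exists_nbrs hN (h.lt s hs)
  obtain ⟨a, ha, hca, rfl⟩ := hp x hx hcx
  obtain ⟨b, hb, hcb, rfl⟩ := hp y hy hcy
  have hab : a ≠ b := by rintro rfl; exact hxy rfl
  have hsa : s ≠ a := by rintro rfl; exact cyc_irrefl hN hcx
  have hsb : s ≠ b := by rintro rfl; exact cyc_irrefl hN hcy
  have h1 := (h.aa s a hs ha hsa hc hca).2.1 hcx
  have h2 := (h.aa s b hs hb hsb hc hcb).2.1 hcy
  have h3 : (a = s - 1 ∧ b = s + 1) ∨ (a = s + 1 ∧ b = s - 1) := by omega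
  rcases h3 with ⟨rfl, rfl⟩ | ⟨rfl, rfl⟩
  · exact ⟨by omega, by omega, hca, hcb⟩
  · exact ⟨by omega, by omega, hcb, hca⟩

theorem IndPath.conv {N : ℕ} {c : ℕ → Bool} {f : ℕ → ℕ} (h : IndPath N c f)
    {s : ℕ} (hs : 1 ≤ s) (hs' : s + 1 ≤ N) (hc : c s = false) (h1 : c (s - 1) = false)
    (h2 : c (s + 1) = false) {j : ℕ} (hj : j < N) (hcyc : cyc N (f s) j) :
    Present N c f j := by
  have e1 := (h.aa s (s - 1) (by omega) (by omega) (by omega) hc h1).2.2 (by omega)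
  have e2 := (h.aa s (s + 1) (by omega) (by omega) (by omega) hc h2).2.2 (by omega)
  have e3 := (h.aa (s - 1) (s + 1) (by omega) (by omega) (by omega) h1 h2).1
  rcases cyc_deg e1 e2 hcyc (h.lt s (by omega)) (h.lt _ (by omega)) (h.lt _ (by omega)) hj
    with e | e | e
  · exact absurd e e3
  · exact ⟨_, by omega, h1, e⟩
  · exact ⟨_, by omega, h2, e⟩

/-- exactly one vertex outside the cycle -/
theorem IndPath.one {N : ℕ} {c : ℕ → Bool} {f : ℕ → ℕ} (h : IndPath N c f) (hN : 5 ≤ N)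
    {t : ℕ} (ht : t ≤ N) (hB : ∀ s, s ≤ N → (c s = true ↔ s = t)) : False := by
  have hp := h.present {t} (by simpa using hB) (by simpa using ht) ∅ (by simp) (by simp) (by simp)
  have key : ∀ s, s ≤ N → s ≠ t → c s = false := by
    intro s hs hst
    simpa using mt (hB s hs).1 hst
  have hct := (hB t ht).2 rfl
  by_cases h0 : 1 ≤ t
  · have := h.two_nbrs hN (s := t - 1) (by omega) (key _ (by omega) (by omega))
      (fun j hj _ => hp j hj (by simp))
    rw [Nat.sub_add_cancel h0, hct] at this
    simp at this
  · obtain rfl : t = 0 := by omega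
    have := h.two_nbrs hN (s := 1) (by omega) (key _ (by omega) (by omega))
      (fun j hj _ => hp j hj (by simp))
    simp [hct] at this

theorem IndPath.two_right {N : ℕ} {c : ℕ → Bool} {f : ℕ → ℕ} (h : IndPath N c f) (hN : 5 ≤ N)
    (hB : ∀ s, s ≤ N → (c s = true ↔ s = N - 1 ∨ s = N)) : False := by
  have key : ∀ s, s + 1 < N → c s = false := by
    intro s hs
    simpa using mt (hB s (by omega)).1 (by omega)
  have c1 : c (N - 1) = true := (hB _ (by omega)).2 (by omega)
  have c2 : c N = true := (hB _ (by omega)).2 (by omega)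
  have hp := h.present {N - 1, N} (by simpa using hB) (by simp) {f N}
    (by simpa using h.lt N le_rfl) (by rw [Finset.card_pair (by omega)]; simp) (by
      simp only [Finset.mem_singleton, forall_eq]
      rintro ⟨s, hs, hcs, e⟩
      have := (h.ab s N hs le_rfl hcs c2).1 e
      obtain rfl : s = N - 1 := by omega
      simp [c1] at hcs)
  have e1 := (h.ab (N - 2) (N - 1) (by omega) (by omega) (key _ (by omega)) c1).2 (by omega)
  have e2 := (h.bb (N - 1) N (by omega) (by omega) (by omega) c1 c2).2.2 (by omega)
  have := h.two_nbrs hN (s := N - 2) (by omega) (key _ (by omega)) (fun j hj hjc => hp j hj (by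
    simp only [Finset.mem_singleton]
    rintro rfl
    rw [e1] at hjc
    exact e2 hjc))
  rw [show N - 2 + 1 = N - 1 by omega, c1] at this
  simp at this

/-- exactly two vertices outside the cycle -/
theorem IndPath.two {N : ℕ} {c : ℕ → Bool} {f : ℕ → ℕ} (h : IndPath N c f) (hN : 5 ≤ N)
    {t u : ℕ} (htu : t < u) (hu : u ≤ N) (hB : ∀ s, s ≤ N → (c s = true ↔ s = t ∨ s = u)) :
    False := by
  have key : ∀ s, s ≤ N → s ≠ t → s ≠ u → c s = false := by
    intro s hs h1 h2
    simpa using mt (hB s (by omega)).1 (by omega)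
  have ct : c t = true := (hB _ (by omega)).2 (by omega)
  have cu : c u = true := (hB _ (by omega)).2 (by omega)
  have hbb := h.bb t u (by omega) hu (by omega) ct cu
  by_cases hgap : t + 1 = u
  · subst hgap
    by_cases hr : t + 1 = N
    · subst hr
      exact h.two_right hN (by simpa using hB)
    by_cases hl : t = 0
    · subst hl
      refine h.rev.two_right hN (fun s hs => ?_)
      rw [hB _ (by omega)]
      omega
    -- both sides nonempty
    have hcd := h.card_image {t, t + 1} (by simpa using hB) (by simp; omega)
    rw [Finset.card_pair (by omega)] at hcd
    obtain ⟨i, hi, hiN⟩ : ∃ i, i < N ∧ ¬ Present N c f i := by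
      by_contra hcon
      push Not at hcon
      have : Finset.range N ⊆ (Finset.range (N + 1) \ {t, t + 1}).image f := by
        intro j hj
        obtain ⟨s, hs, hcs, e⟩ := hcon j (by simpa using hj)
        rw [Finset.mem_image]
        refine ⟨s, ?_, e⟩
        have := (hB s hs).not.1 (by simp [hcs])
        simp only [Finset.mem_sdiff, Finset.mem_range, Finset.mem_insert, Finset.mem_singleton]
        exact ⟨by omega, this⟩
      have := Finset.card_le_card this
      rw [Finset.card_range] at this
      omega
    have hp := h.present {t, t + 1} (by simpa using hB) (by simp; omega) {i}
      (by simpa using hi) (by rw [Finset.card_pair (by omega)]; simp) (by simpa using hiN)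
    have end_nbr : ∀ s, s ≤ N → c s = false →
        ¬ (1 ≤ s ∧ s + 1 ≤ N ∧ c (s - 1) = false ∧ c (s + 1) = false) → cyc N i (f s) := by
      intro s hs hcs hn
      by_contra hcon
      refine hn (h.two_nbrs hN hs hcs (fun j hj hjc => hp j hj ?_))
      simp only [Finset.mem_singleton]
      rintro rfl
      exact hcon (cyc_comm.1 hjc)
    have k1 := key 0 (by omega) (by omega) (by omega)
    have k2 := key (t - 1) (by omega) (by omega) (by omega)
    have k3 := key (t + 2) (by omega) (by omega) (by omega)
    have k4 := key N (by omega) (by omega) (by omega)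
    have n1 := end_nbr 0 (by omega) k1 (by omega)
    have n2 := end_nbr (t - 1) (by omega) k2 (by
      rw [show t - 1 + 1 = t by omega, ct]; simp)
    have n3 := end_nbr (t + 2) (by omega) k3 (by
      rw [show t + 2 - 1 = t + 1 by omega, cu]; simp)
    have n4 := end_nbr N (by omega) k4 (by omega)
    have inj : ∀ a b, a ≤ N → b ≤ N → c a = false → c b = false → f a = f b → a = b := by
      intro a b ha hb hca hcb e
      by_contra hne
      exact (h.aa a b ha hb hne hca hcb).1 e
    have q1 : 0 = t - 1 := by
      rcases cyc_deg n1 n2 n3 hi (h.lt _ (by omega)) (h.lt _ (by omega)) (h.lt _ (by omega))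
        with e | e | e
      · exact inj _ _ (by omega) (by omega) k1 k2 e
      · have := inj _ _ (by omega) (by omega) k1 k3 e
        omega
      · have := inj _ _ (by omega) (by omega) k2 k3 e
        omega
    have q2 : t + 2 = N := by
      rcases cyc_deg n2 n3 n4 hi (h.lt _ (by omega)) (h.lt _ (by omega)) (h.lt _ (by omega))
        with e | e | e
      · have := inj _ _ (by omega) (by omega) k2 k3 e
        omega
      · have := inj _ _ (by omega) (by omega) k2 k4 e
        omega
      · exact inj _ _ (by omega) (by omega) k3 k4 e
    omega
  · have hcyc : cyc N (f t) (f u) := by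
      by_contra hcon
      have := hbb.2.1 hcon
      omega
    have k1 := key (t + 1) (by omega) (by omega) (by omega)
    have k2 := key (u - 1) (by omega) (by omega) (by omega)
    have e1 := (h.ab (t + 1) t (by omega) (by omega) k1 ct).2 (by omega)
    have e2 := (h.ab (u - 1) u (by omega) (by omega) k2 cu).2 (by omega)
    have hne : t + 1 ≠ u - 1 := by
      intro e
      rw [e, e2] at e1
      exact hbb.1 e1.symm
    have e3 := (h.aa (t + 1) (u - 1) (by omega) (by omega) hne k1 k2).2
    rw [e1, e2] at e3
    have e4 := e3.1 hcyc
    have l : t = 0 := by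
      by_contra hcon
      have k3 := key (t - 1) (by omega) (by omega) (by omega)
      have e5 := (h.ab (t - 1) t (by omega) (by omega) k3 ct).2 (by omega)
      exact (h.aa (t - 1) (t + 1) (by omega) (by omega) (by omega) k3 k1).1 (by omega)
    have r : u = N := by
      by_contra hcon
      have k3 := key (u + 1) (by omega) (by omega) (by omega)
      have e5 := (h.ab (u + 1) u (by omega) (by omega) k3 cu).2 (by omega)
      exact (h.aa (u - 1) (u + 1) (by omega) (by omega) (by omega) k2 k3).1 (by omega)
    omega

theorem IndPath.three_right {N : ℕ} {c : ℕ → Bool} {f : ℕ → ℕ} (h : IndPath N c f) (hN : 5 ≤ N)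
    (hB : ∀ s, s ≤ N → (c s = true ↔ s = N - 2 ∨ s = N - 1 ∨ s = N)) : False := by
  have key : ∀ s, s + 2 < N → c s = false := by
    intro s hs
    simpa using mt (hB s (by omega)).1 (by omega)
  have c1 : c (N - 2) = true := (hB _ (by omega)).2 (by omega)
  have c2 : c (N - 1) = true := (hB _ (by omega)).2 (by omega)
  have c3 : c N = true := (hB _ (by omega)).2 (by omega)
  have b12 := h.bb (N - 2) (N - 1) (by omega) (by omega) (by omega) c1 c2
  have b23 := h.bb (N - 1) N (by omega) (by omega) (by omega) c2 c3
  have n12 := b12.2.2 (by omega)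
  have n23 := b23.2.2 (by omega)
  have abs2 : ¬ Present N c f (f (N - 1)) := by
    rintro ⟨s, hs, hcs, e⟩
    have := (h.ab s (N - 1) hs (by omega) hcs c2).1 e
    have := (hB s hs).2 (by omega)
    simp [hcs] at this
  have abs3 : ¬ Present N c f (f N) := by
    rintro ⟨s, hs, hcs, e⟩
    have := (h.ab s N hs (by omega) hcs c3).1 e
    have := (hB s hs).2 (by omega)
    simp [hcs] at this
  have hp := h.present {N - 2, N - 1, N} (by simpa using hB) (by simp) {f (N - 1), f N}
    (by simpa using ⟨h.lt (N - 1) (by omega), h.lt N le_rfl⟩) (by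
      rw [Finset.card_pair b23.1, Finset.card_eq_three.2
        ⟨N - 2, N - 1, N, by omega, by omega, by omega, rfl⟩]) (by
      simpa using ⟨abs2, abs3⟩)
  obtain ⟨x, y, hx, hy, hxy, hcx, hcy⟩ := exists_nbrs hN (h.lt (N - 1) (by omega))
  have pr : ∀ z, z < N → cyc N (f (N - 1)) z → Present N c f z := by
    intro z hz hcz
    refine hp z hz ?_
    simp only [Finset.mem_insert, Finset.mem_singleton, not_or]
    refine ⟨?_, ?_⟩
    · rintro rfl; exact cyc_irrefl hN hcz
    · rintro rfl; exact n23 hcz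
  obtain ⟨s, hs, hcs, hs0, hsc⟩ :
      ∃ s, s ≤ N ∧ c s = false ∧ 1 ≤ s ∧ cyc N (f (N - 1)) (f s) := by
    obtain ⟨s, hs, hcs, rfl⟩ := pr x hx hcx
    obtain ⟨r, hr, hcr, rfl⟩ := pr y hy hcy
    by_cases h0 : 1 ≤ s
    · exact ⟨s, hs, hcs, h0, hcx⟩
    · refine ⟨r, hr, hcr, ?_, hcy⟩
      by_contra h1
      exact hxy (by rw [show s = r by omega])
  have hsN := (hB s hs).not.1 (by simp [hcs])
  have hs3 : s + 3 ≠ N := by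
    intro e
    have := (h.ab s (N - 2) hs (by omega) hcs c1).2 (by omega)
    rw [this] at hsc
    exact n12 (cyc_comm.1 hsc)
  exact abs2 (h.conv hs0 (by omega) hcs (key _ (by omega)) (key _ (by omega))
    (h.lt _ (by omega)) (cyc_comm.1 hsc))

theorem IndPath.three_gap {N : ℕ} {c : ℕ → Bool} {f : ℕ → ℕ} (h : IndPath N c f) (hN : 5 ≤ N)
    {t u : ℕ} (hu : u ≤ N) (htu : t + 2 < u)
    (hB : ∀ s, s ≤ N → (c s = true ↔ s = t ∨ s = t + 1 ∨ s = u)) : False := by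
  have key : ∀ s, s ≤ N → s ≠ t → s ≠ t + 1 → s ≠ u → c s = false := by
    intro s hs h1 h2 h3
    simpa using mt (hB s (by omega)).1 (by omega)
  have c1 : c t = true := (hB _ (by omega)).2 (by omega)
  have c2 : c (t + 1) = true := (hB _ (by omega)).2 (by omega)
  have c3 : c u = true := (hB _ (by omega)).2 (by omega)
  have b13 := h.bb t u (by omega) (by omega) (by omega) c1 c3
  have b23 := h.bb (t + 1) u (by omega) (by omega) (by omega) c2 c3
  have n13 : cyc N (f t) (f u) := by
    by_contra hcon
    have := b13.2.1 hcon
    omega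
  have n23 : cyc N (f (t + 1)) (f u) := by
    by_contra hcon
    have := b23.2.1 hcon
    omega
  have k1 := key (t + 2) (by omega) (by omega) (by omega) (by omega)
  have k2 := key (u - 1) (by omega) (by omega) (by omega) (by omega)
  have e1 := (h.ab (t + 2) (t + 1) (by omega) (by omega) k1 c2).2 (by omega)
  have e2 := (h.ab (u - 1) u (by omega) (by omega) k2 c3).2 (by omega)
  have hne : t + 2 ≠ u - 1 := by
    intro e
    rw [e, e2] at e1
    exact b23.1 e1.symm
  have e3 := (h.aa (t + 2) (u - 1) (by omega) (by omega) hne k1 k2).2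
  rw [e1, e2] at e3
  have e4 := e3.1 n23
  have l : t = 0 := by
    by_contra hcon
    have k3 := key (t - 1) (by omega) (by omega) (by omega) (by omega)
    have e5 := (h.ab (t - 1) t (by omega) (by omega) k3 c1).2 (by omega)
    have e6 := (h.aa (t - 1) (u - 1) (by omega) (by omega) (by omega) k3 k2).2.1
      (by rw [e5, e2]; exact n13)
    omega
  have r : u = N := by
    by_contra hcon
    have k3 := key (u + 1) (by omega) (by omega) (by omega) (by omega)
    have e5 := (h.ab (u + 1) u (by omega) (by omega) k3 c3).2 (by omega)
    exact (h.aa (u - 1) (u + 1) (by omega) (by omega) (by omega) k2 k3).1 (by omega)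
  omega

theorem IndPath.far {N : ℕ} {c : ℕ → Bool} {f : ℕ → ℕ} (h : IndPath N c f) {s t : ℕ}
    (hst : s + 1 < t) (ht : t ≤ N) (hs : c s = true) (hct : c t = true) :
    cyc N (f s) (f t) := by
  by_contra hcon
  have := (h.bb s t (by omega) ht (by omega) hs hct).2.1 hcon
  omega

/-- exactly three vertices outside the cycle -/
theorem IndPath.three {N : ℕ} {c : ℕ → Bool} {f : ℕ → ℕ} (h : IndPath N c f) (hN : 5 ≤ N)
    {t u v : ℕ} (htu : t < u) (huv : u < v) (hv : v ≤ N)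
    (hB : ∀ s, s ≤ N → (c s = true ↔ s = t ∨ s = u ∨ s = v)) : False := by
  have c1 : c t = true := (hB _ (by omega)).2 (by omega)
  have c2 : c u = true := (hB _ (by omega)).2 (by omega)
  have c3 : c v = true := (hB _ (by omega)).2 (by omega)
  have n13 := h.far (by omega) hv c1 c3
  by_cases h1 : t + 1 = u
  · subst h1
    by_cases h2 : t + 2 = v
    · subst h2
      by_cases hr : t + 2 = N
      · subst hr
        exact h.three_right hN (by simpa using hB)
      by_cases hl : t = 0
      · subst hl
        refine h.rev.three_right hN (fun s hs => ?_)
        rw [hB _ (by omega)]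
        omega
      have k1 : c (t - 1) = false := by
        simpa using mt (hB (t - 1) (by omega)).1 (by omega)
      have k2 : c (t + 3) = false := by
        simpa using mt (hB (t + 3) (by omega)).1 (by omega)
      have e1 := (h.ab (t - 1) t (by omega) (by omega) k1 c1).2 (by omega)
      have e2 := (h.ab (t + 3) (t + 2) (by omega) (by omega) k2 c3).2 (by omega)
      have e3 := (h.aa (t - 1) (t + 3) (by omega) (by omega) (by omega) k1 k2).2.1
        (by rw [e1, e2]; exact n13)
      omega
    · exact h.three_gap hN hv (by omega) hB
  · by_cases h2 : u + 1 = v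
    · refine h.rev.three_gap hN (t := N - v) (u := N - t) (by omega) (by omega) (fun s hs => ?_)
      rw [hB _ (by omega)]
      omega
    · exact cyc_tri hN (h.far (by omega) (by omega) c1 c2) (h.far (by omega) hv c2 c3) n13
        (h.lt _ (by omega)) (h.lt _ (by omega)) (h.lt _ (by omega))

/-- exactly four vertices outside the cycle -/
theorem IndPath.four {N : ℕ} {c : ℕ → Bool} {f : ℕ → ℕ} (h : IndPath N c f) (hN : 5 ≤ N)
    {t u v w : ℕ} (htu : t < u) (huv : u < v) (hvw : v < w) (hw : w ≤ N)
    (hB : ∀ s, s ≤ N → (c s = true ↔ s = t ∨ s = u ∨ s = v ∨ s = w)) : False := by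
  have c1 : c t = true := (hB _ (by omega)).2 (by omega)
  have c2 : c u = true := (hB _ (by omega)).2 (by omega)
  have c3 : c v = true := (hB _ (by omega)).2 (by omega)
  have c4 : c w = true := (hB _ (by omega)).2 (by omega)
  have n13 := h.far (by omega) (by omega) c1 c3
  have n14 := h.far (by omega) (by omega) c1 c4
  have n24 := h.far (by omega) (by omega) c2 c4
  have l1 := h.lt t (by omega)
  have l2 := h.lt u (by omega)
  have l3 := h.lt v (by omega)
  have l4 := h.lt w (by omega)
  have d12 := (h.bb t u (by omega) (by omega) (by omega) c1 c2).1
  have d13 := (h.bb t v (by omega) (by omega) (by omega) c1 c3).1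
  have d14 := (h.bb t w (by omega) (by omega) (by omega) c1 c4).1
  have d23 := (h.bb u v (by omega) (by omega) (by omega) c2 c3).1
  have d24 := (h.bb u w (by omega) (by omega) (by omega) c2 c4).1
  have d34 := (h.bb v w (by omega) (by omega) (by omega) c3 c4).1
  have g1 : t + 1 = u := by
    by_contra hcon
    have := h.far (by omega) (by omega) c1 c2
    have := cyc_deg n13 n14 this l1 l3 l4 l2
    omega
  have g3 : v + 1 = w := by
    by_contra hcon
    have := h.far (by omega) (by omega) c3 c4
    have := cyc_deg (cyc_comm.1 n14) (cyc_comm.1 n24) (cyc_comm.1 this) l4 l1 l2 l3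
    omega
  have g2 : u + 1 = v := by
    by_contra hcon
    have := h.far (by omega) (by omega) c2 c3
    exact cyc_quad hN n13 (cyc_comm.1 this) n24 (cyc_comm.1 n14) l1 l3 l2 l4 d12 d34
  subst g1 g2 g3
  have key : ∀ s, s ≤ N → (s < t ∨ t + 3 < s) → c s = false := by
    intro s hs h1
    simpa using mt (hB s (by omega)).1 (by omega)
  have hl : t ≤ 1 := by
    by_contra hcon
    have k1 := key (t - 1) (by omega) (by omega)
    have k2 := key (t - 2) (by omega) (by omega)
    have e1 := (h.ab (t - 1) t (by omega) (by omega) k1 c1).2 (by omega)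
    have e2 := (h.aa (t - 1) (t - 2) (by omega) (by omega) (by omega) k1 k2).2.2 (by omega)
    rw [e1] at e2
    rcases cyc_deg n13 n14 e2 l1 l3 l4 (h.lt _ (by omega)) with e | e | e
    · exact d34 e
    · have := (h.ab (t - 2) _ (by omega) (by omega) k2 c3).1 e.symm
      omega
    · have := (h.ab (t - 2) _ (by omega) (by omega) k2 c4).1 e.symm
      omega
  have hr : N ≤ t + 4 := by
    by_contra hcon
    have k1 := key (t + 4) (by omega) (by omega)
    have k2 := key (t + 5) (by omega) (by omega)
    have e1 := (h.ab (t + 4) (t + 1 + 1 + 1) (by omega) (by omega) k1 c4).2 (by omega)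
    have e2 := (h.aa (t + 4) (t + 5) (by omega) (by omega) (by omega) k1 k2).2.2 (by omega)
    rw [e1] at e2
    rcases cyc_deg (cyc_comm.1 n14) (cyc_comm.1 n24) e2 l4 l1 l2 (h.lt _ (by omega))
      with e | e | e
    · exact d12 e
    · have := (h.ab (t + 5) _ (by omega) (by omega) k2 c1).1 e.symm
      omega
    · have := (h.ab (t + 5) _ (by omega) (by omega) k2 c2).1 e.symm
      omega
  have k1 := key (t - 1) (by omega) (by omega)
  have k2 := key (t + 4) (by omega) (by omega)
  have e1 := (h.ab (t - 1) t (by omega) (by omega) k1 c1).2 (by omega)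
  have e2 := (h.ab (t + 4) (t + 1 + 1 + 1) (by omega) (by omega) k2 c4).2 (by omega)
  have := (h.aa (t - 1) (t + 4) (by omega) (by omega) (by omega) k1 k2).2.1
    (by rw [e1, e2]; exact n14)
  omega

theorem IndPath.false {N : ℕ} {c : ℕ → Bool} {f : ℕ → ℕ} (h : IndPath N c f) (hN : 5 ≤ N) :
    False := by
  set B := (Finset.range (N + 1)).filter (fun t => c t = true) with hBdef
  have hB : ∀ s, s ≤ N → (c s = true ↔ s ∈ B) := by
    intro s hs
    simp only [hBdef, Finset.mem_filter, Finset.mem_range]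
    constructor
    · intro h; exact ⟨by omega, h⟩
    · exact fun h => h.2
  have hBN : ∀ s ∈ B, s ≤ N := by
    intro s hs
    simp only [hBdef, Finset.mem_filter, Finset.mem_range] at hs
    omega
  obtain ⟨k, hk⟩ : ∃ k, B.card = k := ⟨_, rfl⟩
  have hrange : ∀ s, s ≤ N → (c s = true ↔ ∃ r, B.orderEmbOfFin hk r = s) := by
    intro s hs
    rw [hB s hs, ← Finset.mem_coe, ← Finset.range_orderEmbOfFin B hk]
    rfl
  have hmem : ∀ r, B.orderEmbOfFin hk r ≤ N := fun r =>
    hBN _ (Finset.orderEmbOfFin_mem B hk r)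
  have hmono : ∀ r s, r < s → B.orderEmbOfFin hk r < B.orderEmbOfFin hk s := fun r s hrs =>
    (B.orderEmbOfFin hk).strictMono hrs
  generalize B.orderEmbOfFin hk = g at hrange hmem hmono
  have hgc : ∀ r, c (g r) = true := fun r => (hrange _ (hmem r)).2 ⟨r, rfl⟩
  rcases Nat.lt_or_ge k 5 with hlt | hge
  · interval_cases k
    · have := h.card_image B hB hBN
      have h2 : ((Finset.range (N + 1) \ B).image f) ⊆ Finset.range N := by
        intro j hj
        rw [Finset.mem_image] at hj
        obtain ⟨s, hs, rfl⟩ := hj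
        simp only [Finset.mem_sdiff, Finset.mem_range] at hs ⊢
        exact h.lt s (by omega)
      have h3 := Finset.card_le_card h2
      rw [Finset.card_range] at h3
      omega
    · refine h.one hN (hmem 0) (fun s hs => ?_)
      rw [hrange s hs]
      simp [Fin.exists_fin_succ, eq_comm]
    · refine h.two hN (hmono 0 1 (by decide)) (hmem 1) (fun s hs => ?_)
      rw [hrange s hs]
      simp [Fin.exists_fin_succ, eq_comm]
    · refine h.three hN (hmono 0 1 (by decide)) (hmono 1 2 (by decide)) (hmem 2) (fun s hs => ?_)
      rw [hrange s hs]
      simp [Fin.exists_fin_succ, eq_comm]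
    · refine h.four hN (hmono 0 1 (by decide)) (hmono 1 2 (by decide)) (hmono 2 3 (by decide))
        (hmem 3) (fun s hs => ?_)
      rw [hrange s hs]
      simp [Fin.exists_fin_succ, eq_comm]
  · have m1 := hmono ⟨0, by omega⟩ ⟨1, by omega⟩ (by simp)
    have m2 := hmono ⟨1, by omega⟩ ⟨2, by omega⟩ (by simp)
    have m3 := hmono ⟨2, by omega⟩ ⟨3, by omega⟩ (by simp)
    have m4 := hmono ⟨3, by omega⟩ ⟨4, by omega⟩ (by simp)
    exact cyc_tri hN (h.far (by omega) (hmem _) (hgc ⟨0, by omega⟩) (hgc ⟨2, by omega⟩))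
      (h.far (by omega) (hmem _) (hgc ⟨2, by omega⟩) (hgc ⟨4, by omega⟩))
      (h.far (by omega) (hmem _) (hgc ⟨0, by omega⟩) (hgc ⟨4, by omega⟩))
      (h.lt _ (hmem _)) (h.lt _ (hmem _)) (h.lt _ (hmem _))

theorem path_from {N i : ℕ} (hN : 5 ≤ N) (hi : i < N) (x : Bool) :
    ∃ p : ℕ → Bool × ℕ, p 0 = (x, i) ∧ (∀ t, t + 2 ≤ N → (p t).2 < N) ∧
      ∀ s t, s + 2 ≤ N → t + 2 ≤ N → s < t →
        p s ≠ p t ∧ (cpAdj N (p s) (p t) ↔ s + 1 = t) := by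
  have base : ∃ p : ℕ → Bool × ℕ, p 0 = (x, 0) ∧ (∀ t, t + 2 ≤ N → (p t).2 < N) ∧
      ∀ s t, s + 2 ≤ N → t + 2 ≤ N → s < t →
        p s ≠ p t ∧ (cpAdj N (p s) (p t) ↔ s + 1 = t) := by
    cases x
    · refine ⟨fun t => (false, t), rfl, fun t ht => by simp only; omega, ?_⟩
      intro s t hs ht hst
      simp [cpAdj, cyc]
      omega
    · refine ⟨fun t => if t = 0 then (true, 0) else (false, t - 1), rfl, ?_, ?_⟩
      · intro t ht; dsimp only; split_ifs <;> simp only <;> omega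
      · intro s t hs ht hst
        dsimp only
        split_ifs <;> simp [cpAdj, cyc] <;> omega
  obtain ⟨p, h0, h1, h2⟩ := base
  refine ⟨fun t => rotv N i (p t), ?_, fun t ht => rot_lt hi (h1 t ht), ?_⟩
  · simp only [h0]
    exact rotv_zero hi
  · intro s t hs ht hst
    simp only [ne_eq]
    rw [rotv_inj hi (h1 s hs) (h1 t ht), rotv_adj hN hi (h1 s hs) (h1 t ht)]
    exact h2 s t hs ht hst

theorem mk_emb {V : Type*} (H : SimpleGraph V) (N : ℕ) (q : ℕ → V)
    (h : ∀ s t, s ≤ N → t ≤ N → s < t → q s ≠ q t ∧ (H.Adj (q s) (q t) ↔ s + 1 = t)) :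
    Nonempty (pathGraph (N + 1) ↪g H) := by
  refine ⟨⟨⟨fun t => q t.val, ?_⟩, ?_⟩⟩
  · intro s t hst
    simp only at hst
    rcases lt_trichotomy s.val t.val with hlt | heq | hlt
    · exact absurd hst (h s t (by omega) (by omega) hlt).1
    · exact Fin.ext heq
    · exact absurd hst.symm (h t s (by omega) (by omega) hlt).1
  · intro s t
    rw [pathGraph_adj]
    change H.Adj (q s.val) (q t.val) ↔ _
    rcases lt_trichotomy s.val t.val with hlt | heq | hlt
    · rw [(h s t (by omega) (by omega) hlt).2]
      omega
    · rw [heq]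
      simp
    · rw [H.adj_comm, (h t s (by omega) (by omega) hlt).2]
      omega

/-- forget the component -/
def proj {N m : ℕ} (x : Fin (m + 1) × Bool × Fin N) : Bool × ℕ := (x.2.1, x.2.2.val)

theorem proj_inj {N m : ℕ} {x y : Fin (m + 1) × Bool × Fin N} (h : x.1 = y.1) :
    x = y ↔ proj x = proj y := by
  constructor
  · rintro rfl; rfl
  · intro e
    simp only [proj, Prod.mk.injEq] at e
    exact Prod.ext h (Prod.ext e.1 (Fin.ext e.2))

/-- put a vertex into component `k` -/
def lift' {N m : ℕ} (hN : 5 ≤ N) (k : Fin (m + 1)) (x : Bool × ℕ) : Fin (m + 1) × Bool × Fin N :=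
  (k, x.1, ⟨x.2 % N, Nat.mod_lt _ (by omega)⟩)

theorem proj_lift {N m : ℕ} (hN : 5 ≤ N) (k : Fin (m + 1)) {x : Bool × ℕ} (hx : x.2 < N) :
    proj (lift' hN k x) = x := by
  simp [proj, lift', Nat.mod_eq_of_lt hx]

/-- disjoint copies of the complementary prism -/
def prisms (N m : ℕ) (hN : 5 ≤ N) : SimpleGraph (Fin (m + 1) × Bool × Fin N) where
  Adj x y := x.1 = y.1 ∧ cpAdj N (proj x) (proj y)
  symm := ⟨fun _ _ h => ⟨h.1.symm, cpAdj_comm.1 h.2⟩⟩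
  loopless := ⟨fun x h => by
    have := h.2
    simp only [cpAdj, cyc] at this
    simp only [ne_eq, not_true_eq_false, false_and, and_false, or_false] at this
    omega⟩

theorem prisms_free (N m : ℕ) (hN : 5 ≤ N) : IsEmpty (pathGraph (N + 1) ↪g prisms N m hN) := by
  refine ⟨fun e => ?_⟩
  set F : ℕ → Fin (m + 1) × Bool × Fin N :=
    fun t => if h : t < N + 1 then e ⟨t, h⟩ else e 0 with hF
  have hinj : ∀ s t, s ≤ N → t ≤ N → s ≠ t → F s ≠ F t := by
    intro s t hs ht hst h
    simp only [hF, dif_pos (show s < N + 1 by omega), dif_pos (show t < N + 1 by omega)] at h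
    have := e.injective h
    simp only [Fin.mk.injEq] at this
    exact hst this
  have hadj : ∀ s t, s ≤ N → t ≤ N →
      ((prisms N m hN).Adj (F s) (F t) ↔ (s + 1 = t ∨ t + 1 = s)) := by
    intro s t hs ht
    simp only [hF, dif_pos (show s < N + 1 by omega), dif_pos (show t < N + 1 by omega)]
    rw [e.map_adj_iff, pathGraph_adj]
  have hcomp : ∀ t, t ≤ N → (F t).1 = (F 0).1 := by
    intro t
    induction t with
    | zero => intro _; rfl
    | succ t ih =>
      intro ht
      rw [← ih (by omega)]
      exact ((hadj t (t + 1) (by omega) ht).2 (Or.inl rfl)).1.symm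
  have hne : ∀ s t, s ≤ N → t ≤ N → s ≠ t → proj (F s) ≠ proj (F t) := by
    intro s t hs ht hst h
    exact hinj s t hs ht hst ((proj_inj (by rw [hcomp s hs, hcomp t ht])).2 h)
  have hcp : ∀ s t, s ≤ N → t ≤ N →
      (cpAdj N (proj (F s)) (proj (F t)) ↔ (s + 1 = t ∨ t + 1 = s)) := by
    intro s t hs ht
    rw [← hadj s t hs ht]
    exact ⟨fun h => ⟨by rw [hcomp s hs, hcomp t ht], h⟩, fun h => h.2⟩
  have hP : IndPath N (fun t => (proj (F t)).1) (fun t => (proj (F t)).2) := by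
    refine ⟨fun s _ => (F s).2.2.isLt, fun s t hs ht hst h1 h2 => ?_,
      fun s t hs ht hst h1 h2 => ?_, fun s t hs ht h1 h2 => ?_⟩
    · have e1 := hne s t hs ht hst
      have e2 := hcp s t hs ht
      rw [ne_eq, Prod.ext_iff, h1, h2] at e1
      simp only [cpAdj, h1, h2] at e2
      refine ⟨by simpa using e1, by simpa using e2⟩
    · have e1 := hne s t hs ht hst
      have e2 := hcp s t hs ht
      rw [ne_eq, Prod.ext_iff, h1, h2] at e1
      have e1' : (proj (F s)).2 ≠ (proj (F t)).2 := by simpa using e1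
      simp only [cpAdj, h1, h2] at e2
      refine ⟨e1', by simpa [e1'] using e2⟩
    · have e2 := hcp s t hs ht
      simp only [cpAdj, h1, h2] at e2
      simpa using e2
  exact hP.false hN

theorem same_comp (N m : ℕ) (hN : 5 ≤ N) (H : SimpleGraph (Fin (m + 1) × Bool × Fin N))
    (u v : Fin (m + 1) × Bool × Fin N) (huv : u ≠ v) (hk : u.1 = v.1)
    (hH : ∀ x y : Fin (m + 1) × Bool × Fin N, x.1 = u.1 → y.1 = u.1 → x ≠ y →
      (H.Adj x y ↔ flipAdj N (proj u) (proj v) (proj x) (proj y))) :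
    Nonempty (pathGraph (N + 1) ↪g H) := by
  obtain ⟨p, h1, h2⟩ := flip_all hN (proj u) (proj v) (fun h => huv ((proj_inj hk).2 h))
    u.2.2.isLt v.2.2.isLt
  refine mk_emb H N (fun t => lift' hN u.1 (p t)) (fun s t hs ht hst => ?_)
  have hne : lift' (m := m) hN u.1 (p s) ≠ lift' hN u.1 (p t) := by
    intro h
    have := congrArg proj h
    rw [proj_lift hN _ (h1 s hs), proj_lift hN _ (h1 t ht)] at this
    exact (h2 s t hs ht hst).1 this
  refine ⟨hne, ?_⟩
  rw [hH (lift' hN u.1 (p s)) (lift' hN u.1 (p t)) rfl rfl hne, proj_lift hN _ (h1 s hs), proj_lift hN _ (h1 t ht)]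
  exact (h2 s t hs ht hst).2

theorem isPair_iff {N m : ℕ} {u v x y : Fin (m + 1) × Bool × Fin N} (hk : u.1 = v.1)
    (hx : x.1 = u.1) (hy : y.1 = u.1) :
    isPair (proj u) (proj v) (proj x) (proj y) ↔ s(x, y) = s(u, v) := by
  unfold isPair
  rw [← proj_inj hx, ← proj_inj (hy.trans hk), ← proj_inj (hx.trans hk), ← proj_inj hy]
  simp

theorem cross_comp (N m : ℕ) (hN : 5 ≤ N) (u v : Fin (m + 1) × Bool × Fin N) (hk : u.1 ≠ v.1) :
    Nonempty (pathGraph (N + 1) ↪g (prisms N m hN ⊔ SimpleGraph.fromEdgeSet {s(u, v)})) := by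
  obtain ⟨p, h0, h1, h2⟩ := path_from hN u.2.2.isLt u.2.1
  have hu0 : lift' hN u.1 (p 0) = u := by
    rw [proj_inj (by rfl), proj_lift hN _ (h1 0 (by omega)), h0]; rfl
  refine mk_emb _ N (fun t => if t = 0 then (v.1, !v.2.1, v.2.2) else if t = 1 then v
    else lift' hN u.1 (p (t - 2))) (fun s t hs ht hst => ?_)
  have hkl : ∀ x : Bool × ℕ, (lift' (m := m) hN u.1 x).1 = u.1 := fun _ => rfl
  have ht0 : t ≠ 0 := by omega
  rw [if_neg ht0]
  by_cases hs0 : s = 0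
  · subst hs0
    rw [if_pos rfl]
    by_cases ht1 : t = 1
    · subst ht1
      rw [if_pos rfl]
      constructor
      · intro h
        have := congrArg (fun x => x.2.1) h
        simp at this
      · simp only [zero_add, iff_true, SimpleGraph.sup_adj]
        left
        refine ⟨rfl, ?_⟩
        simp [cpAdj, proj]
    · rw [if_neg ht1]
      constructor
      · intro h
        exact hk (congrArg Prod.fst h).symm
      · refine iff_of_false ?_ (by omega)
        simp only [SimpleGraph.sup_adj, SimpleGraph.fromEdgeSet_adj, Set.mem_singleton_iff]
        rintro (h | ⟨h, _⟩)
        · exact hk h.1.symm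
        · rw [Sym2.eq_iff] at h
          rcases h with h | h
          · exact hk (congrArg Prod.fst h.1).symm
          · have := congrArg (fun x => x.2.1) h.1
            simp at this
  · rw [if_neg hs0, if_neg (show t ≠ 1 by omega)]
    by_cases hs1 : s = 1
    · subst hs1
      rw [if_pos rfl]
      constructor
      · intro h
        exact hk (congrArg Prod.fst h).symm
      · simp only [SimpleGraph.sup_adj, SimpleGraph.fromEdgeSet_adj, Set.mem_singleton_iff]
        constructor
        · rintro (h | ⟨h, _⟩)
          · exact absurd h.1.symm hk
          · rw [Sym2.eq_iff] at h
            rcases h with h | h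
            · exact absurd (congrArg Prod.fst h.1).symm hk
            · by_contra hne
              apply (h2 0 (t - 2) (by omega) (by omega) (by omega)).1
              have := h.2
              rw [← hu0] at this
              have := congrArg proj this
              rw [proj_lift hN _ (h1 _ (by omega)), proj_lift hN _ (h1 _ (by omega))] at this
              exact this.symm
        · rintro rfl
          right
          rw [hu0]
          exact ⟨Sym2.eq_swap, fun h => hk (congrArg Prod.fst h).symm⟩
    · rw [if_neg hs1]
      have h3 := h2 (s - 2) (t - 2) (by omega) (by omega) (by omega)
      have a1 := h1 (s - 2) (by omega)
      have a2 := h1 (t - 2) (by omega)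
      constructor
      · intro h
        have := congrArg proj h
        rw [proj_lift hN _ a1, proj_lift hN _ a2] at this
        exact h3.1 this
      · simp only [SimpleGraph.sup_adj, SimpleGraph.fromEdgeSet_adj, Set.mem_singleton_iff]
        have : (prisms N m hN).Adj (lift' hN u.1 (p (s - 2))) (lift' hN u.1 (p (t - 2))) ↔
            s + 1 = t := by
          unfold prisms
          simp only
          rw [proj_lift hN _ a1, proj_lift hN _ a2, h3.2]
          simp only [lift', true_and]
          omega
        rw [this]
        constructor
        · rintro (h | ⟨h, _⟩)
          · exact h
          · exfalso
            rw [Sym2.eq_iff] at h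
            rcases h with h | h
            · have := congrArg Prod.fst h.2
              exact hk this
            · have := congrArg Prod.fst h.1
              exact hk this
        · exact Or.inl

theorem prisms_saturated (N m : ℕ) (hN : 5 ≤ N) :
    InducedSaturated (prisms N m hN) (pathGraph (N + 1)) := by
  refine ⟨prisms_free N m hN, fun u v huv => ?_, fun u v huv hnadj => ?_⟩
  · refine same_comp N m hN _ u v huv.ne huv.1 (fun x y hx hy hxy => ?_)
    have hadj : (prisms N m hN).Adj x y ↔ cpAdj N (proj x) (proj y) :=
      ⟨fun h => h.2, fun h => ⟨hx.trans hy.symm, h⟩⟩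
    have himp : s(x, y) = s(u, v) → (prisms N m hN).Adj x y := by
      intro h
      rw [← SimpleGraph.mem_edgeSet, h]
      exact huv
    rw [flipAdj, isPair_iff huv.1 hx hy, SimpleGraph.deleteEdges_adj, ← hadj,
      Set.mem_singleton_iff]
    tauto
  · by_cases hk : u.1 = v.1
    · refine same_comp N m hN _ u v huv hk (fun x y hx hy hxy => ?_)
      have hadj : (prisms N m hN).Adj x y ↔ cpAdj N (proj x) (proj y) :=
        ⟨fun h => h.2, fun h => ⟨hx.trans hy.symm, h⟩⟩
      have himp : s(x, y) = s(u, v) → ¬ (prisms N m hN).Adj x y := by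
        intro h
        rw [← SimpleGraph.mem_edgeSet, h]
        exact hnadj
      rw [flipAdj, isPair_iff hk hx hy, SimpleGraph.sup_adj, SimpleGraph.fromEdgeSet_adj, ← hadj,
        Set.mem_singleton_iff]
      tauto
    · exact cross_comp N m hN u v hk

theorem complete_saturated (m : ℕ) :
    InducedSaturated (⊤ : SimpleGraph (Fin (m + 3))) (pathGraph (2 + 1)) := by
  refine ⟨⟨fun e => ?_⟩, fun u v huv => ?_, fun u v huv hnadj => ?_⟩
  · have h1 : ¬ (pathGraph (2 + 1)).Adj 0 2 := by simp [pathGraph_adj]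
    apply h1
    rw [← e.map_adj_iff, SimpleGraph.top_adj]
    intro h
    have := e.injective h
    simp at this
  · obtain ⟨w, hw⟩ : ∃ w : Fin (m + 3), w ∉ ({u, v} : Finset (Fin (m + 3))) := by
      by_contra hcon
      push Not at hcon
      have h1 : (Finset.univ : Finset (Fin (m + 3))) ⊆ {u, v} := fun w _ => hcon w
      have h2 := Finset.card_le_card h1
      have h3 := Finset.card_le_two (a := u) (b := v)
      simp only [Finset.card_univ, Fintype.card_fin] at h2
      omega
    simp only [Finset.mem_insert, Finset.mem_singleton, not_or] at hw
    have huv' := huv.ne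
    obtain ⟨hwu, hwv⟩ := hw
    refine mk_emb _ 2 (fun t => if t = 0 then u else if t = 1 then w else v) ?_
    intro s t hs ht hst
    have : (s = 0 ∧ t = 1) ∨ (s = 0 ∧ t = 2) ∨ (s = 1 ∧ t = 2) := by omega
    rcases this with ⟨rfl, rfl⟩ | ⟨rfl, rfl⟩ | ⟨rfl, rfl⟩
    · simp [SimpleGraph.deleteEdges_adj, hwu, hwv, Ne.symm hwu]
    · simp [SimpleGraph.deleteEdges_adj, huv']
    · simp [SimpleGraph.deleteEdges_adj, hwu, hwv]
  · exact absurd ((SimpleGraph.top_adj u v).2 huv) hnadj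

theorem exists_large_P3n_induced_saturated (n m : ℕ) (hn : 0 < n) (hm : 0 < m) :
    ∃ (V : Type) (_ : Fintype V) (G : SimpleGraph V),
      m < Nat.card V ∧ InducedSaturated G (pathGraph (3 * n)) := by
  by_cases h1 : n = 1
  · subst h1
    refine ⟨Fin (m + 3), inferInstance, ⊤, ?_, complete_saturated m⟩
    rw [Nat.card_eq_fintype_card, Fintype.card_fin]
    omega
  · obtain ⟨N, hN⟩ : ∃ N, 3 * n = N + 1 := ⟨3 * n - 1, by omega⟩
    have hN5 : 5 ≤ N := by omega
    rw [hN]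
    refine ⟨Fin (m + 1) × Bool × Fin N, inferInstance, prisms N m hN5, ?_,
      prisms_saturated N m hN5⟩
    simp only [Nat.card_eq_fintype_card, Fintype.card_prod, Fintype.card_fin, Fintype.card_bool]
    nlinarith
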